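/- Let A, B, C be bounded self-adjoint operators on an infinite-dimensional separable Hilbert space 𝓗 with σ(A), σ(B), σ(C) ⊆ [a,b], and let φ : [a,b]² → ℂ be a bounded measurable function. Then the operator ∫_A^B φ(x,C) dx, defined as ∫_a^b ( ∫_a^α φ(x,C) dx ) [E_B(dα) − E_A(dα)], exists as a bounded operator; here ∫_a^α φ(x,C) dx is a Bochner integral of the B(𝓗)-valued map x ↦ φ(x,C) = ∫_a^b φ(x,y) E_C(dy), and the outer integrals against E_A and E_B exist as operator-norm Riemann–Stieltjes integrals. -/

import Mathlib

open MeasureTheory Filter Topology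

noncomputable section

/-- A projection-valued spectral measure for a bounded self-adjoint operator `A`
on a complex Hilbert space: projection-valued, multiplicative, countably additive in
the strong topology, and reproducing `A` via its moment: for every vector `x`,
`re ⟪x, A x⟫ = ∫ t dν_x(t)` where `ν_x(s) = ‖E s x‖²`. -/
structure SpectralMeasure {H : Type*} [NormedAddCommGroup H] [InnerProductSpace ℂ H]
    [CompleteSpace H] (A : H →L[ℂ] H) where
  E : Set ℝ → H →L[ℂ] H
  idem : ∀ s, E s * E s = E s
  selfadj : ∀ s, IsSelfAdjoint (E s)
  empty : E ∅ = 0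
  univ' : E Set.univ = 1
  inter : ∀ s t, E (s ∩ t) = E s * E t
  countably_additive : ∀ f : ℕ → Set ℝ, (∀ n, MeasurableSet (f n)) →
    Pairwise (Function.onFun Disjoint f) → ∀ x : H, HasSum (fun n => E (f n) x) (E (⋃ n, f n) x)
  ν : H → Measure ℝ
  ν_eq : ∀ (x : H) (s : Set ℝ), MeasurableSet s → ν x s = ENNReal.ofReal (‖E s x‖ ^ 2)
  moment : ∀ x : H, (inner ℂ x (A x) : ℂ).re = ∫ t, t ∂(ν x)

/-- `IsRSIntegral F μ a b L` : the operator-norm Riemann–Stieltjes sums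
`Σ_i F(ξ_i) μ((t_i, t_{i+1}])` of the operator-valued function `F` against the
(projection-valued) set function `μ`, over tagged partitions
`a = t_0 < t_1 < ... < t_n = b` with tags `ξ_i ∈ [t_i, t_{i+1}]`, converge in operator
norm to `L` as the mesh tends to `0`. -/
def IsRSIntegral {H : Type*} [NormedAddCommGroup H] [InnerProductSpace ℂ H] [CompleteSpace H]
    (F : ℝ → H →L[ℂ] H) (μ : Set ℝ → H →L[ℂ] H) (a b : ℝ) (L : H →L[ℂ] H) : Prop :=
  ∀ ε > (0 : ℝ), ∃ δ > (0 : ℝ), ∀ (n : ℕ) (t ξ : ℕ → ℝ),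
    0 < n → t 0 = a → t n = b →
    (∀ i < n, t i < t (i + 1) ∧ t (i + 1) - t i < δ ∧ ξ i ∈ Set.Icc (t i) (t (i + 1))) →
    ‖(∑ i ∈ Finset.range n, F (ξ i) * μ (Set.Ioc (t i) (t (i + 1)))) - L‖ < ε

/-!
Put `F α = ∫_a^α Φ` with `‖Φ‖ ≤ K`, and let `P x = E (-∞, x]` for one of the spectral measures.
Integration by parts suggests the indefinite Riemann–Stieltjes integral
`G s = F s * P s - ∫_a^s Φ x * P x dx`, where `P` is in general not norm measurable, so that the
last integral is only formed on vectors. On a cell `(s, t]` with tag `ξ`, the difference between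
`F ξ * E (s, t]` and `G t - G s` maps `u` to a vector of norm at most
`2 * K * (t - s) * ‖E (s, t] u‖`. The vectors `E (tᵢ, tᵢ₊₁] u` are orthogonal, so by Cauchy–Schwarz
the cell errors add up to at most
`2 * K * √(∑ (tᵢ₊₁ - tᵢ) ^ 2) * ‖u‖ ≤ 2 * K * √(mesh * (b - a)) * ‖u‖`.
-/

section OperatorNorm

open scoped ComplexStarModule

variable {H : Type*} [NormedAddCommGroup H] [InnerProductSpace ℂ H] [CompleteSpace H]

theorem norm_realPart_le_of_norm_inner_le {T : H →L[ℂ] H} {M : ℝ} (hM : 0 ≤ M)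
    (hT : ∀ u, ‖(inner ℂ u (T u) : ℂ)‖ ≤ M * ‖u‖ ^ 2) : ‖(ℜ T : H →L[ℂ] H)‖ ≤ M := by
  have re_inner (u : H) :
      (ℜ T : H →L[ℂ] H).reApplyInnerSelf u = (inner ℂ u (T u) : ℂ).re := by
    have inner_star : (inner ℂ (star T u) u : ℂ) = inner ℂ u (T u) := by
      rw [ContinuousLinearMap.star_eq_adjoint, ContinuousLinearMap.adjoint_inner_left]
    have inner_symm : (inner ℂ (T u) u : ℂ).re = (inner ℂ u (T u) : ℂ).re :=
      inner_re_symm (𝕜 := ℂ) _ _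
    rw [ContinuousLinearMap.reApplyInnerSelf_apply, realPart_apply_coe, smul_apply, add_apply,
      inner_smul_left_eq_smul, inner_add_left, inner_star, RCLike.re_to_complex, Complex.smul_re,
      Complex.add_re, inner_symm, smul_eq_mul]
    ring
  rw [ContinuousLinearMap.norm_eq_iSup_rayleighQuotient _ (ℜ T).2.isSymmetric]
  refine ciSup_le fun u => ?_
  rw [ContinuousLinearMap.rayleighQuotient, abs_div, abs_sq, re_inner]
  exact div_le_of_le_mul₀ (sq_nonneg _) hM ((Complex.abs_re_le_norm _).trans (hT u))

theorem opNorm_le_two_mul_of_norm_inner_le {T : H →L[ℂ] H} {M : ℝ} (hM : 0 ≤ M)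
    (hT : ∀ u, ‖(inner ℂ u (T u) : ℂ)‖ ≤ M * ‖u‖ ^ 2) : ‖T‖ ≤ 2 * M := by
  have norm_im : ‖(ℑ T : H →L[ℂ] H)‖ ≤ M := by
    rw [← norm_neg, ← NegMemClass.coe_neg, ← realPart_I_smul]
    refine norm_realPart_le_of_norm_inner_le hM fun u => ?_
    rw [smul_apply, inner_smul_right, norm_mul, Complex.norm_I, one_mul]
    exact hT u
  calc ‖T‖ = ‖(ℜ T : H →L[ℂ] H) + Complex.I • (ℑ T : H →L[ℂ] H)‖ := by
        rw [realPart_add_I_smul_imaginaryPart]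
    _ ≤ ‖(ℜ T : H →L[ℂ] H)‖ + ‖(ℑ T : H →L[ℂ] H)‖ := by
        simpa [norm_smul] using norm_add_le (ℜ T : H →L[ℂ] H) (Complex.I • (ℑ T : H →L[ℂ] H))
    _ ≤ M + M := add_le_add (norm_realPart_le_of_norm_inner_le hM hT) norm_im
    _ = 2 * M := (two_mul M).symm

end OperatorNorm

section Integration

theorem stronglyMeasurable_of_tendsto_comap_nhds {α β γ : Type*} [MeasurableSpace α]
    [MeasurableSpace β] [τ : TopologicalSpace β] [OpensMeasurableSpace β]
    [SecondCountableTopology β] [TopologicalSpace γ] [TopologicalSpace.PseudoMetrizableSpace γ]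
    {g : α → β} (hg : Measurable g) {f : α → γ}
    (hf : ∀ x, Tendsto f (comap g (𝓝 (g x))) (𝓝 (f x))) : StronglyMeasurable f := by
  let : TopologicalSpace α := τ.induced g
  have : SecondCountableTopology α := TopologicalSpace.secondCountableTopology_induced α β g
  have : OpensMeasurableSpace α :=
    ⟨borel_comap.trans_le ((MeasurableSpace.comap_mono OpensMeasurableSpace.borel_le).trans
      hg.comap_le)⟩
  have f_continuous : Continuous f := continuous_iff_continuousAt.2 fun x => by
    rw [ContinuousAt, nhds_induced]
    exact hf x
  exact f_continuous.stronglyMeasurable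

theorem intervalIntegrable_of_norm_le {E : Type*} [NormedAddCommGroup E] {f : ℝ → E}
    (hf : StronglyMeasurable f) {K : ℝ} (hK : ∀ x, ‖f x‖ ≤ K) (a b : ℝ) :
    IntervalIntegrable f volume a b :=
  (intervalIntegrable_const (c := K)).mono_fun hf.aestronglyMeasurable
    (.of_forall fun x => (hK x).trans (le_abs_self K))

variable {𝕜 E F : Type*} [RCLike 𝕜] [NormedAddCommGroup E] [NormedSpace 𝕜 E]
  [NormedAddCommGroup F] [NormedSpace ℝ F] [NormedSpace 𝕜 F]

theorem exists_clm_apply_eq_intervalIntegral {T : ℝ → E →L[𝕜] F} {K : ℝ} (hK : ∀ x, ‖T x‖ ≤ K)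
    {a b : ℝ} (hT : ∀ u, IntervalIntegrable (fun x => T x u) volume a b) :
    ∃ J : E →L[𝕜] F, ∀ u, J u = ∫ x in a..b, T x u := by
  let J : E →ₗ[𝕜] F :=
    { toFun u := ∫ x in a..b, T x u
      map_add' u v := by
        simp only [map_add]
        exact intervalIntegral.integral_add (hT u) (hT v)
      map_smul' c u := by
        simp only [map_smul, RingHom.id_apply]
        exact intervalIntegral.integral_smul c _ }
  have norm_J_le (u : E) : ‖J u‖ ≤ K * |b - a| * ‖u‖ := by
    rw [mul_right_comm]
    exact intervalIntegral.norm_integral_le_of_norm_le_const fun x _ =>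
      (T x).le_of_opNorm_le (hK x) u
  exact ⟨J.mkContinuous _ norm_J_le, fun _ => rfl⟩

end Integration

theorem sum_sq_sub_le_mul_sub {n : ℕ} {t : ℕ → ℝ} {δ : ℝ}
    (ht : ∀ i < n, t i ≤ t (i + 1)) (hδ : ∀ i < n, t (i + 1) - t i ≤ δ) :
    ∑ i ∈ Finset.range n, (t (i + 1) - t i) ^ 2 ≤ δ * (t n - t 0) := by
  rw [← Finset.sum_range_sub, Finset.mul_sum]
  refine Finset.sum_le_sum fun i hi => ?_
  have hi := Finset.mem_range.1 hi
  rw [sq]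
  exact mul_le_mul_of_nonneg_right (hδ i hi) (sub_nonneg.2 (ht i hi))

section RiemannStieltjes

variable {H : Type*} [NormedAddCommGroup H] [InnerProductSpace ℂ H] [CompleteSpace H]

theorem IsRSIntegral.sub {F : ℝ → H →L[ℂ] H} {μ ν : Set ℝ → H →L[ℂ] H} {a b : ℝ}
    {L L' : H →L[ℂ] H} (hμ : IsRSIntegral F μ a b L) (hν : IsRSIntegral F ν a b L') :
    IsRSIntegral F (fun s => μ s - ν s) a b (L - L') := by
  intro ε hε
  obtain ⟨δ, hδ, hμ⟩ := hμ (ε / 2) (half_pos hε)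
  obtain ⟨δ', hδ', hν⟩ := hν (ε / 2) (half_pos hε)
  refine ⟨min δ δ', lt_min hδ hδ', fun n t ξ hn h0 hn' hp => ?_⟩
  have hμ := hμ n t ξ hn h0 hn' fun i hi =>
    ⟨(hp i hi).1, (hp i hi).2.1.trans_le (min_le_left _ _), (hp i hi).2.2⟩
  have hν := hν n t ξ hn h0 hn' fun i hi =>
    ⟨(hp i hi).1, (hp i hi).2.1.trans_le (min_le_right _ _), (hp i hi).2.2⟩
  simp only [mul_sub, Finset.sum_sub_distrib]
  rw [sub_sub_sub_comm]
  exact (norm_sub_le _ _).trans_lt (by linarith)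

namespace SpectralMeasure

variable {A : H →L[ℂ] H} (S : SpectralMeasure A)

theorem norm_E_le_one (s : Set ℝ) : ‖S.E s‖ ≤ 1 :=
  IsStarProjection.norm_le _ ⟨S.idem s, S.selfadj s⟩

theorem norm_mul_E_le (T : H →L[ℂ] H) (s : Set ℝ) : ‖T * S.E s‖ ≤ ‖T‖ :=
  (norm_mul_le _ _).trans (mul_le_of_le_one_right (norm_nonneg T) (S.norm_E_le_one s))

theorem norm_E_apply_le (s : Set ℝ) (u : H) : ‖S.E s u‖ ≤ ‖u‖ := by
  simpa using (S.E s).le_of_opNorm_le (S.norm_E_le_one s) u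

theorem norm_E_apply_mono {s t : Set ℝ} (hst : s ⊆ t) (u : H) : ‖S.E s u‖ ≤ ‖S.E t u‖ := by
  rw [← Set.inter_eq_left.2 hst, S.inter]
  exact S.norm_E_apply_le s (S.E t u)

theorem measureReal_ν (u : H) {s : Set ℝ} (hs : MeasurableSet s) :
    (S.ν u).real s = ‖S.E s u‖ ^ 2 := by
  rw [Measure.real, S.ν_eq u s hs, ENNReal.toReal_ofReal (sq_nonneg _)]

instance isFiniteMeasure_ν (u : H) : IsFiniteMeasure (S.ν u) :=
  ⟨by rw [S.ν_eq u _ .univ]; exact ENNReal.ofReal_lt_top⟩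

theorem opNorm_le_two_mul_of_inner_eq_integral {f : ℝ → ℂ} {M : ℝ} (hf : ∀ y, ‖f y‖ ≤ M)
    {T : H →L[ℂ] H} (hT : ∀ u, (inner ℂ u (T u) : ℂ) = ∫ y, f y ∂(S.ν u)) : ‖T‖ ≤ 2 * M := by
  refine opNorm_le_two_mul_of_norm_inner_le ((norm_nonneg _).trans (hf 0)) fun u => ?_
  have total_mass : (S.ν u).real Set.univ = ‖u‖ ^ 2 := by
    rw [S.measureReal_ν u .univ, S.univ', one_apply_eq_self]
  rw [hT, ← total_mass]
  exact norm_integral_le_of_norm_le_const (.of_forall hf)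

open Classical in
/-- The vector measure `s ↦ E s u`; as `VectorMeasure` requires, it vanishes on sets that are not
measurable, where `E` itself need not. -/
def vectorMeasure (u : H) : VectorMeasure ℝ H where
  measureOf' s := if MeasurableSet s then S.E s u else 0
  empty' := by simp [S.empty]
  not_measurable' _ hs := if_neg hs
  m_iUnion' f hf hdisj := by
    simpa only [hf, MeasurableSet.iUnion hf, if_true] using S.countably_additive f hf hdisj u

theorem vectorMeasure_apply (u : H) {s : Set ℝ} (hs : MeasurableSet s) :
    S.vectorMeasure u s = S.E s u :=
  if_pos hs

theorem E_Ioc_apply {s t : ℝ} (hst : s ≤ t) (u : H) :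
    S.E (Set.Ioc s t) u = S.E (Set.Iic t) u - S.E (Set.Iic s) u := by
  rw [← S.vectorMeasure_apply u measurableSet_Ioc, ← S.vectorMeasure_apply u measurableSet_Iic,
    ← S.vectorMeasure_apply u measurableSet_Iic,
    ← VectorMeasure.of_sdiff measurableSet_Iic measurableSet_Iic (Set.Iic_subset_Iic.2 hst),
    Set.Iic_sdiff_Iic]

theorem norm_E_Ioc_apply_sq {s t : ℝ} (hst : s ≤ t) (u : H) :
    ‖S.E (Set.Ioc s t) u‖ ^ 2 = ‖S.E (Set.Iic t) u‖ ^ 2 - ‖S.E (Set.Iic s) u‖ ^ 2 := by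
  rw [← S.measureReal_ν u measurableSet_Ioc, ← S.measureReal_ν u measurableSet_Iic,
    ← S.measureReal_ν u measurableSet_Iic,
    ← measureReal_sdiff (Set.Iic_subset_Iic.2 hst) measurableSet_Iic, Set.Iic_sdiff_Iic]

theorem norm_E_Iic_sub_apply_sq (x y : ℝ) (u : H) :
    ‖S.E (Set.Iic x) u - S.E (Set.Iic y) u‖ ^ 2 =
      |‖S.E (Set.Iic x) u‖ ^ 2 - ‖S.E (Set.Iic y) u‖ ^ 2| := by
  wlog hxy : y ≤ x generalizing x y
  · rw [norm_sub_rev, abs_sub_comm]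
    exact this y x (le_of_not_ge hxy)
  rw [← S.norm_E_Ioc_apply_sq hxy, ← S.E_Ioc_apply hxy, abs_sq]

theorem stronglyMeasurable_E_Iic_apply (u : H) :
    StronglyMeasurable fun x => S.E (Set.Iic x) u := by
  let g : ℝ → ℝ := fun x => ‖S.E (Set.Iic x) u‖ ^ 2
  have g_mono : Monotone g := fun x y hxy =>
    pow_le_pow_left₀ (norm_nonneg _) (S.norm_E_apply_mono (Set.Iic_subset_Iic.2 hxy) u) 2
  -- The curve need not be continuous, but it is a continuous function of `g`.
  refine stronglyMeasurable_of_tendsto_comap_nhds g_mono.measurable fun x => ?_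
  rw [tendsto_iff_norm_sub_tendsto_zero]
  have sqrt_tendsto : Tendsto (fun r => √|r - g x|) (𝓝 (g x)) (𝓝 0) := by
    have : Continuous fun r => √|r - g x| := by fun_prop
    simpa using this.tendsto (g x)
  refine (sqrt_tendsto.comp tendsto_comap).congr fun y => ?_
  rw [Function.comp_apply, ← S.norm_E_Iic_sub_apply_sq, Real.sqrt_sq (norm_nonneg _)]

theorem sum_norm_E_Ioc_apply_sq_le {n : ℕ} {t : ℕ → ℝ} (ht : ∀ i < n, t i ≤ t (i + 1)) (u : H) :
    ∑ i ∈ Finset.range n, ‖S.E (Set.Ioc (t i) (t (i + 1))) u‖ ^ 2 ≤ ‖u‖ ^ 2 :=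
  calc ∑ i ∈ Finset.range n, ‖S.E (Set.Ioc (t i) (t (i + 1))) u‖ ^ 2
      = ∑ i ∈ Finset.range n,
          (‖S.E (Set.Iic (t (i + 1))) u‖ ^ 2 - ‖S.E (Set.Iic (t i)) u‖ ^ 2) :=
        Finset.sum_congr rfl fun i hi => S.norm_E_Ioc_apply_sq (ht i (Finset.mem_range.1 hi)) u
    _ = ‖S.E (Set.Iic (t n)) u‖ ^ 2 - ‖S.E (Set.Iic (t 0)) u‖ ^ 2 :=
        Finset.sum_range_sub (fun i => ‖S.E (Set.Iic (t i)) u‖ ^ 2) n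
    _ ≤ ‖S.E (Set.Iic (t n)) u‖ ^ 2 := sub_le_self _ (sq_nonneg _)
    _ ≤ ‖u‖ ^ 2 := pow_le_pow_left₀ (norm_nonneg _) (S.norm_E_apply_le _ u) 2

section CellBound

variable {F G : ℝ → H →L[ℂ] H} {c : ℝ}

theorem opNorm_sum_mul_E_Ioc_sub_le (hc : 0 ≤ c)
    (hcell : ∀ ⦃s t ξ : ℝ⦄, s ≤ t → ξ ∈ Set.Icc s t → ∀ u,
      ‖(F ξ * S.E (Set.Ioc s t) - (G t - G s)) u‖ ≤ c * (t - s) * ‖S.E (Set.Ioc s t) u‖)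
    {n : ℕ} {t ξ : ℕ → ℝ} {δ : ℝ} (ht : ∀ i < n, t i ≤ t (i + 1))
    (hδ : ∀ i < n, t (i + 1) - t i ≤ δ) (hξ : ∀ i < n, ξ i ∈ Set.Icc (t i) (t (i + 1))) :
    ‖∑ i ∈ Finset.range n, F (ξ i) * S.E (Set.Ioc (t i) (t (i + 1))) - (G (t n) - G (t 0))‖ ≤
      c * √(δ * (t n - t 0)) := by
  refine ContinuousLinearMap.opNorm_le_bound _ (by positivity) fun u => ?_
  rw [← Finset.sum_range_sub (fun i => G (t i)), ← Finset.sum_sub_distrib, sum_apply]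
  set w : ℕ → ℝ := fun i => ‖S.E (Set.Ioc (t i) (t (i + 1))) u‖
  calc ‖∑ i ∈ Finset.range n,
        (F (ξ i) * S.E (Set.Ioc (t i) (t (i + 1))) - (G (t (i + 1)) - G (t i))) u‖
      ≤ ∑ i ∈ Finset.range n, c * (t (i + 1) - t i) * w i :=
        norm_sum_le_of_le _ fun i hi =>
          have hi := Finset.mem_range.1 hi
          hcell (ht i hi) (hξ i hi) u
    _ = c * ∑ i ∈ Finset.range n, (t (i + 1) - t i) * w i := by
        simp only [Finset.mul_sum, mul_assoc]
    _ ≤ c * (√(∑ i ∈ Finset.range n, (t (i + 1) - t i) ^ 2) *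
          √(∑ i ∈ Finset.range n, w i ^ 2)) := by
        gcongr
        exact Real.sum_mul_le_sqrt_mul_sqrt _ _ _
    _ ≤ c * (√(δ * (t n - t 0)) * √(‖u‖ ^ 2)) := by
        gcongr
        · exact sum_sq_sub_le_mul_sub ht hδ
        · exact S.sum_norm_E_Ioc_apply_sq_le ht u
    _ = c * √(δ * (t n - t 0)) * ‖u‖ := by rw [Real.sqrt_sq (norm_nonneg u), mul_assoc]

theorem isRSIntegral_of_norm_cell_le (hc : 0 ≤ c)
    (hcell : ∀ ⦃s t ξ : ℝ⦄, s ≤ t → ξ ∈ Set.Icc s t → ∀ u,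
      ‖(F ξ * S.E (Set.Ioc s t) - (G t - G s)) u‖ ≤ c * (t - s) * ‖S.E (Set.Ioc s t) u‖)
    (a b : ℝ) : IsRSIntegral F S.E a b (G b - G a) := by
  intro ε hε
  have bound_tendsto : Tendsto (fun δ => c * √(δ * (b - a))) (𝓝[>] 0) (𝓝 0) := by
    have : Continuous fun δ => c * √(δ * (b - a)) := by fun_prop
    simpa using (this.tendsto 0).mono_left nhdsWithin_le_nhds
  obtain ⟨δ, bound_lt, δ_pos⟩ :=
    ((bound_tendsto.eventually_lt_const hε).and self_mem_nhdsWithin).exists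
  refine ⟨δ, δ_pos, fun n t ξ _ ht0 htn hp => lt_of_le_of_lt ?_ bound_lt⟩
  rw [← ht0, ← htn]
  exact S.opNorm_sum_mul_E_Ioc_sub_le hc hcell (fun i hi => (hp i hi).1.le)
    (fun i hi => (hp i hi).2.1.le) (fun i hi => (hp i hi).2.2)

end CellBound

section Primitive

variable {Φ : ℝ → H →L[ℂ] H} {K : ℝ}

theorem intervalIntegrable_mul_E_Iic_apply (hΦ : StronglyMeasurable Φ) (hK : ∀ x, ‖Φ x‖ ≤ K)
    (u : H) (s t : ℝ) : IntervalIntegrable (fun x => (Φ x * S.E (Set.Iic x)) u) volume s t :=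
  intervalIntegrable_of_norm_le
    (isBoundedBilinearMap_apply.continuous.comp_stronglyMeasurable
      (hΦ.prodMk (S.stronglyMeasurable_E_Iic_apply u)))
    (fun x => (Φ x * S.E (Set.Iic x)).le_of_opNorm_le ((S.norm_mul_E_le _ _).trans (hK x)) u) s t

/-- The deviation, on the vector `u`, of the term `F ξ * E (s, t]` of a Riemann–Stieltjes sum for
`F α = ∫_a^α Φ` from the value that integration by parts assigns to `∫_s^t F dE`. -/
def cellError (S : SpectralMeasure A) (Φ : ℝ → H →L[ℂ] H) (a s t ξ : ℝ) (u : H) : H :=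
  (∫ x in a..ξ, Φ x) (S.E (Set.Ioc s t) u) -
    ((∫ x in a..t, Φ x) (S.E (Set.Iic t) u) - (∫ x in a..s, Φ x) (S.E (Set.Iic s) u) -
      ∫ x in s..t, (Φ x * S.E (Set.Iic x)) u)

theorem cellError_eq_sub_integral (hΦ : StronglyMeasurable Φ) (hK : ∀ x, ‖Φ x‖ ≤ K)
    (a ξ : ℝ) {s t : ℝ} (hst : s ≤ t) (u : H) :
    S.cellError Φ a s t ξ u =
      (∫ x in s..ξ, Φ x) (S.E (Set.Ioc s t) u) -
        ∫ x in s..t, Φ x (S.E (Set.Iic t) u - S.E (Set.Iic x) u) := by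
  have hint := intervalIntegrable_of_norm_le hΦ hK
  have integrable_apply : IntervalIntegrable (fun x => Φ x (S.E (Set.Iic t) u)) volume s t :=
    ⟨(hint s t).1.apply_continuousLinearMap _, (hint s t).2.apply_continuousLinearMap _⟩
  have integral_sub_eq : ∫ x in s..t, Φ x (S.E (Set.Iic t) u - S.E (Set.Iic x) u) =
      (∫ x in s..t, Φ x) (S.E (Set.Iic t) u) - ∫ x in s..t, (Φ x * S.E (Set.Iic x)) u := by
    rw [ContinuousLinearMap.intervalIntegral_apply (hint s t),
      ← intervalIntegral.integral_sub integrable_apply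
        (S.intervalIntegrable_mul_E_Iic_apply hΦ hK u s t)]
    simp only [map_sub, mul_apply_eq_comp]
  rw [cellError, integral_sub_eq,
    ← intervalIntegral.integral_interval_sub_left (hint a ξ) (hint a s),
    ← intervalIntegral.integral_interval_sub_left (hint a t) (hint a s), S.E_Ioc_apply hst]
  simp only [sub_apply, map_sub]
  abel

theorem norm_cellError_le (hΦ : StronglyMeasurable Φ) (hK : ∀ x, ‖Φ x‖ ≤ K)
    (a : ℝ) {s t ξ : ℝ} (hst : s ≤ t) (hξ : ξ ∈ Set.Icc s t) (u : H) :
    ‖S.cellError Φ a s t ξ u‖ ≤ 2 * K * (t - s) * ‖S.E (Set.Ioc s t) u‖ := by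
  have K_nonneg : 0 ≤ K := (norm_nonneg _).trans (hK a)
  have tag_error : ‖(∫ x in s..ξ, Φ x) (S.E (Set.Ioc s t) u)‖ ≤
      K * (t - s) * ‖S.E (Set.Ioc s t) u‖ := by
    refine ContinuousLinearMap.le_of_opNorm_le _ ?_ _
    calc ‖∫ x in s..ξ, Φ x‖ ≤ K * |ξ - s| :=
          intervalIntegral.norm_integral_le_of_norm_le_const fun x _ => hK x
      _ = K * (ξ - s) := by rw [abs_of_nonneg (sub_nonneg.2 hξ.1)]
      _ ≤ K * (t - s) := by gcongr; exact hξ.2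
  have parts_error : ‖∫ x in s..t, Φ x (S.E (Set.Iic t) u - S.E (Set.Iic x) u)‖ ≤
      K * ‖S.E (Set.Ioc s t) u‖ * |t - s| := by
    refine intervalIntegral.norm_integral_le_of_norm_le_const fun x hx => ?_
    rw [Set.uIoc_of_le hst] at hx
    rw [← S.E_Ioc_apply hx.2]
    refine (Φ x).le_of_opNorm_le_of_le (hK x) ?_
    exact S.norm_E_apply_mono (Set.Ioc_subset_Ioc_left hx.1.le) u
  rw [S.cellError_eq_sub_integral hΦ hK a ξ hst u]
  rw [abs_of_nonneg (sub_nonneg.2 hst)] at parts_error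
  exact (norm_sub_le _ _).trans (by linarith)

theorem exists_isRSIntegral_intervalIntegral (hΦ : StronglyMeasurable Φ) (hK : ∀ x, ‖Φ x‖ ≤ K)
    (a b : ℝ) : ∃ L, IsRSIntegral (fun α => ∫ x in a..α, Φ x) S.E a b L := by
  have hint := S.intervalIntegrable_mul_E_Iic_apply hΦ hK
  choose J hJ using fun s => exists_clm_apply_eq_intervalIntegral
    (fun x => (S.norm_mul_E_le (Φ x) (Set.Iic x)).trans (hK x)) (fun u => hint u a s)
  let G : ℝ → H →L[ℂ] H := fun s => (∫ x in a..s, Φ x) * S.E (Set.Iic s) - J s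
  have K_nonneg : 0 ≤ K := (norm_nonneg _).trans (hK a)
  refine ⟨G b - G a, S.isRSIntegral_of_norm_cell_le (mul_nonneg zero_le_two K_nonneg)
    (fun s t ξ hst hξ u => ?_) a b⟩
  have J_sub : J t u - J s u = ∫ x in s..t, (Φ x * S.E (Set.Iic x)) u := by
    rw [hJ, hJ, intervalIntegral.integral_interval_sub_left (hint u a t) (hint u a s)]
  refine (congrArg norm ?_).trans_le (S.norm_cellError_le hΦ hK a hst hξ u)
  rw [cellError, ← J_sub]
  simp only [G, sub_apply, mul_apply_eq_comp]
  abel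

end Primitive

end SpectralMeasure

theorem stmt8_general {A B : H →L[ℂ] H} (EA : SpectralMeasure A) (EB : SpectralMeasure B)
    {Φ : ℝ → H →L[ℂ] H} (hΦ : StronglyMeasurable Φ) {K : ℝ} (hK : ∀ x, ‖Φ x‖ ≤ K) (a b : ℝ) :
    (∀ α, IntervalIntegrable Φ volume a α) ∧
    ∃ L : H →L[ℂ] H,
      IsRSIntegral (fun α => ∫ x in a..α, Φ x) (fun s => EB.E s - EA.E s) a b L := by
  obtain ⟨LA, hLA⟩ := EA.exists_isRSIntegral_intervalIntegral hΦ hK a b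
  obtain ⟨LB, hLB⟩ := EB.exists_isRSIntegral_intervalIntegral hΦ hK a b
  exact ⟨intervalIntegrable_of_norm_le hΦ hK a, LB - LA, hLB.sub hLA⟩

end RiemannStieltjes

/-- Let `A`, `B`, `C` be bounded self-adjoint operators with spectra in
`[a,b]` and let `φ : [a,b]² → ℂ` be bounded and measurable.  Let `Φ x = φ(x, C)` be the
bounded operator obtained by applying `φ(x, ·)` to `C` via the (Borel) functional
calculus, characterized by `⟪u, Φ x u⟫ = ∫ φ(x,y) dν_u(y)` with `ν_u(s) = ‖E_C(s)u‖²`.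
Then `∫_A^B φ(x,C) dx := ∫_a^b (∫_a^α φ(x,C) dx) [E_B(dα) − E_A(dα)]` exists as a bounded
operator: the inner integrals exist as Bochner integrals and the outer integral exists as
an operator-norm Riemann–Stieltjes integral. -/
theorem stmt8 {H : Type*} [NormedAddCommGroup H] [InnerProductSpace ℂ H] [CompleteSpace H]
    [TopologicalSpace.SeparableSpace H] (hinf : ¬ FiniteDimensional ℂ H)
    (a b : ℝ) (hab : a ≤ b)
    (A B C : H →L[ℂ] H)
    (hA : IsSelfAdjoint A) (hB : IsSelfAdjoint B) (hC : IsSelfAdjoint C)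
    (EA : SpectralMeasure A) (EB : SpectralMeasure B) (EC : SpectralMeasure C)
    (hAspec : EA.E (Set.Icc a b) = 1) (hBspec : EB.E (Set.Icc a b) = 1)
    (hCspec : EC.E (Set.Icc a b) = 1)
    (φ : ℝ → ℝ → ℂ) (hφmeas : Measurable (Function.uncurry φ))
    (M : ℝ) (hφbdd : ∀ x y, ‖φ x y‖ ≤ M)
    (Φ : ℝ → H →L[ℂ] H) (hΦmeas : StronglyMeasurable Φ)
    (hΦ : ∀ (x : ℝ) (u : H), (inner ℂ u (Φ x u) : ℂ) = ∫ y, φ x y ∂(EC.ν u)) :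
    (∀ α ∈ Set.Icc a b, IntervalIntegrable Φ volume a α) ∧
    ∃ L : H →L[ℂ] H,
      IsRSIntegral (fun α => ∫ x in a..α, Φ x) (fun s => EB.E s - EA.E s) a b L := by
  have norm_Φ_le (x : ℝ) : ‖Φ x‖ ≤ 2 * M :=
    EC.opNorm_le_two_mul_of_inner_eq_integral (hφbdd x) (hΦ x)
  exact (stmt8_general EA EB hΦmeas norm_Φ_le a b).imp_left fun hint α _ => hint α

end
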